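/- Let G be a finite simple graph such that every vertex of G belongs to some maximum independent set (i.e., V(G) = corona(G)). Then G is isomorphic to the typical KE graph for α(G) (the graph on vertex set {1,…,2α(G)} whose edges are exactly the pairs {i, i+α(G)} for i ∈ {1,…,α(G)}) if and only if Ω(G) is a maximal hke collection. -/

import Mathlib

open Finset

/-- The union of a finite collection of finite sets. -/
def famUnion (Γ : Finset (Finset ℕ)) : Finset ℕ := Γ.sup id

/-- The intersection of a finite collection of finite sets
(equal to the usual intersection when the collection is nonempty). -/
def famInter (Γ : Finset (Finset ℕ)) : Finset ℕ :=
  (Γ.sup id).filter (fun x => ∀ A ∈ Γ, x ∈ A)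

/-- `F` is a hereditary König–Egerváry (hke) collection with `α(F) = α`:
`α` is a positive integer and `|⋃Γ| + |⋂Γ| = 2α` for every nonempty subcollection `Γ` of `F`. -/
def IsHKE (F : Finset (Finset ℕ)) (α : ℕ) : Prop :=
  0 < α ∧ ∀ Γ ⊆ F, Γ.Nonempty → (famUnion Γ).card + (famInter Γ).card = 2 * α

/-- `F` is a maximal hke collection: it is an hke collection and no collection
properly containing it is an hke collection. -/
def IsMaxHKE (F : Finset (Finset ℕ)) : Prop :=
  (∃ α, IsHKE F α) ∧ ∀ F' : Finset (Finset ℕ), F ⊂ F' → ¬ ∃ β, IsHKE F' β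

/-- A finset `S` is independent in the graph `G` if no two of its vertices are adjacent. -/
def IsIndepFinset (G : SimpleGraph ℕ) (S : Finset ℕ) : Prop :=
  ∀ x ∈ S, ∀ y ∈ S, ¬ G.Adj x y

open Classical in
/-- The independence number of the finite graph with vertex set `V` and adjacency `G`. -/
noncomputable def indepNum (G : SimpleGraph ℕ) (V : Finset ℕ) : ℕ :=
  (V.powerset.filter (fun S => IsIndepFinset G S)).sup Finset.card

open Classical in
/-- `Ω(G)`: the collection of all maximum independent sets of the finite graph with
vertex set `V` and adjacency `G`. -/
noncomputable def omegaColl (G : SimpleGraph ℕ) (V : Finset ℕ) : Finset (Finset ℕ) :=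
  V.powerset.filter (fun S => IsIndepFinset G S ∧ S.card = indepNum G V)

/-!
Call a fixed-point-free involution `p` of a finite set `W` a pairing of `W`, and a subset of `W`
meeting every pair `{x, p x}` in exactly one point a transversal. For a nonempty collection `Γ` of
transversals, `p` exchanges `⋂ Γ` with `W \ ⋃ Γ`, so the transversals form an hke collection.

Conversely, let `F` be hke, `A₀ ∈ F`, and let `W ⊇ ⋃ F` have `2α` elements. The hke identity for
`insert A₀ Γ` says that as many points of `A₀` lie in all members of `Γ` as points of `W \ A₀` lie
in none. Letting `Γ` vary, this yields a bijection `A₀ → W \ A₀` exchanging membership and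
non-membership in every member of `F`, i.e. a pairing of which all members of `F` are transversals.
Since different pairings never have nested collections of transversals, the maximal hke
collections are exactly the collections of all transversals of a pairing. Finally, `Ω(G)` is the
collection of transversals of a pairing `p` of `V(G)` iff the edges of `G` are the pairs `{x, p x}`.
-/

section BijOn

variable {β γ P : Type*}

lemma exists_mem_le_of_card_filter_le_eq [Preorder P] [DecidableLE P] {s : β → P} {t : γ → P}
    {A : Finset β} {B : Finset γ} (hcard : ∀ a, #{x ∈ A | a ≤ s x} = #{y ∈ B | a ≤ t y})
    {x : β} (hx : x ∈ A) : ∃ y ∈ B, s x ≤ t y := by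
  have hpos : 0 < #{y ∈ B | s x ≤ t y} := hcard (s x) ▸ card_pos.2 ⟨x, by simp [hx]⟩
  simpa only [Finset.Nonempty, mem_filter] using card_pos.1 hpos

lemma exists_bijOn_of_card_filter_le_eq [Nonempty γ] [PartialOrder P] [DecidableLE P]
    {s : β → P} {t : γ → P} {A : Finset β} {B : Finset γ}
    (hcard : ∀ a, #{x ∈ A | a ≤ s x} = #{y ∈ B | a ≤ t y}) :
    ∃ e : β → γ, Set.BijOn e A B ∧ ∀ x ∈ A, t (e x) = s x := by
  classical
  induction A using Finset.strongInduction generalizing B with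
  | H A ih =>
    have exists_le_left {y} (hy : y ∈ B) : ∃ x ∈ A, t y ≤ s x :=
      exists_mem_le_of_card_filter_le_eq (fun a ↦ (hcard a).symm) hy
    rcases A.eq_empty_or_nonempty with rfl | hA
    · have hB : B = ∅ := eq_empty_of_forall_notMem fun y hy ↦ by simpa using exists_le_left hy
      exact ⟨fun _ ↦ Classical.arbitrary γ, by simp [hB]⟩
    -- A maximal value of `s` is also a value of `t`; match it off and remove it on both sides.
    obtain ⟨x, hxA, hmax⟩ := A.exists_maximalFor s hA
    obtain ⟨y, hyB, hxy⟩ := exists_mem_le_of_card_filter_le_eq hcard hxA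
    obtain ⟨x', hx'A, hyx'⟩ := exists_le_left hyB
    have hyx : t y = s x := le_antisymm (hyx'.trans (hmax hx'A (hxy.trans hyx'))) hxy
    have hcard_erase a : #{z ∈ A.erase x | a ≤ s z} = #{z ∈ B.erase y | a ≤ t z} := by
      simp only [filter_erase, card_erase_eq_ite, mem_filter, hxA, hyB, hyx, hcard a]
    obtain ⟨e, he, hte⟩ := ih (A.erase x) (erase_ssubset hxA) hcard_erase
    have heq : Set.EqOn e (Function.update e x y) (A.erase x) := fun z hz ↦
      (Function.update_of_ne (ne_of_mem_erase hz) y e).symm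
    refine ⟨Function.update e x y, ?_, fun z hz ↦ ?_⟩
    · rw [← insert_erase hxA, ← insert_erase hyB, coe_insert, coe_insert]
      simpa only [Function.update_self] using
        (he.congr heq).insert (a := x) (by simp)
    · obtain rfl | hzx := eq_or_ne z x
      · rw [Function.update_self, hyx]
      · rw [Function.update_of_ne hzx, hte z (mem_erase.2 ⟨hzx, hz⟩)]

end BijOn

/-- `p` partitions the finite set `W` into the two-element sets `{x, p x}`. Encoded as a globally
defined involution whose fixed points are exactly the points outside `W`. -/
structure IsPairing {β : Type*} (p : β → β) (W : Finset β) : Prop where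
  involutive : Function.Involutive p
  apply_ne_iff : ∀ x, p x ≠ x ↔ x ∈ W

/-- The subsets of `W` that contain exactly one of `x` and `p x` for every `x ∈ W`; for a pairing
`p` of `W` these are the systems of representatives of the pairs `{x, p x}`. -/
def transversals {β : Type*} [DecidableEq β] (p : β → β) (W : Finset β) : Finset (Finset β) :=
  {A ∈ W.powerset | ∀ x ∈ W, x ∈ A ↔ p x ∉ A}

lemma mem_transversals {β : Type*} [DecidableEq β] {p : β → β} {W A : Finset β} :
    A ∈ transversals p W ↔ A ⊆ W ∧ ∀ x ∈ W, x ∈ A ↔ p x ∉ A := by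
  simp [transversals]

namespace IsPairing

section Pairing

variable {β γ : Type*} {p : β → β} {W : Finset β}

lemma apply_mem_iff (hp : IsPairing p W) {x : β} : p x ∈ W ↔ x ∈ W := by
  rw [← hp.apply_ne_iff, ← hp.apply_ne_iff, hp.involutive x, ne_comm]

lemma card_add_card_eq (hp : IsPairing p W) {S T : Finset β} (hS : S ⊆ W) (hT : T ⊆ W)
    (hST : ∀ x ∈ W, x ∈ S ↔ p x ∉ T) : #T + #S = #W := by
  classical
  have himage : S.image p = W \ T := by
    ext x
    have hx : x ∈ S.image p ↔ p x ∈ S :=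
      ⟨fun h ↦ by
        obtain ⟨y, hy, rfl⟩ := mem_image.1 h
        rwa [hp.involutive y], fun h ↦ mem_image.2 ⟨p x, h, hp.involutive x⟩⟩
    rw [hx, mem_sdiff, ← hp.apply_mem_iff]
    refine ⟨fun h ↦ ⟨hS h, ?_⟩, fun h ↦ (hST _ h.1).2 ?_⟩
    · simpa only [hp.involutive x] using (hST _ (hS h)).1 h
    · simpa only [hp.involutive x] using h.2
  rw [← card_image_of_injective S hp.involutive.injective, himage, card_sdiff_of_subset hT,
    Nat.add_sub_cancel' (card_le_card hT)]

lemma two_mul_card_of_mem_transversals [DecidableEq β] (hp : IsPairing p W) {A : Finset β}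
    (hA : A ∈ transversals p W) : 2 * #A = #W := by
  obtain ⟨hAW, hmem⟩ := mem_transversals.1 hA
  rw [two_mul, hp.card_add_card_eq hAW hAW hmem]

lemma exists_mem_eq_or_eq_apply [DecidableEq β] (hp : IsPairing p W) {A : Finset β}
    (hA : A ∈ transversals p W) {x : β} (hx : x ∈ W) : ∃ a ∈ A, x = a ∨ x = p a := by
  by_cases hxA : x ∈ A
  · exact ⟨x, hxA, Or.inl rfl⟩
  · refine ⟨p x, ?_, Or.inr (hp.involutive x).symm⟩
    rwa [(mem_transversals.1 hA).2 x hx, not_not] at hxA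

lemma exists_eqOn_of_bijOn [DecidableEq β] {A B : Finset β} {e : β → β} (he : Set.BijOn e A B)
    (hAB : Disjoint A B) : ∃ p, IsPairing p (A ∪ B) ∧ Set.EqOn p e A := by
  rcases isEmpty_or_nonempty β with _ | _
  · exact ⟨e, ⟨isEmptyElim, isEmptyElim⟩, fun x ↦ isEmptyElim x⟩
  set e' := Function.invFunOn e A
  have heB {x} (hx : x ∈ A) : e x ∈ B := he.mapsTo hx
  have hinv := he.invOn_invFunOn
  have he'A {x} (hx : x ∈ B) : e' x ∈ A := (Set.BijOn.symm hinv.symm he).mapsTo hx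
  have he'e {x} (hx : x ∈ A) : e' (e x) = x := hinv.1 hx
  have hee' {x} (hx : x ∈ B) : e (e' x) = x := hinv.2 hx
  have hdisj {x} (hx : x ∈ A) : x ∉ B := disjoint_left.1 hAB hx
  refine ⟨fun x ↦ if x ∈ A then e x else if x ∈ B then e' x else x, ⟨fun x ↦ ?_, fun x ↦ ?_⟩,
    fun x hx ↦ if_pos hx⟩ <;> grind

lemma exists_semiconj_of_bijOn {q : γ → γ} {W' : Finset γ} (hq : IsPairing q W') {f : β → γ}
    (hf : Set.BijOn f W W') : ∃ p, IsPairing p W ∧ ∀ x ∈ W, f (p x) = q (f x) := by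
  classical
  have hpre (x) (hx : x ∈ W) : ∃ y ∈ W, f y = q (f x) :=
    hf.surjOn (hq.apply_mem_iff.2 (hf.mapsTo hx))
  choose! p hpW hfp using hpre
  have hpp {x} (hx : x ∈ W) : p (p x) = x :=
    hf.injOn (hpW _ (hpW _ hx)) hx (by rw [hfp _ (hpW _ hx), hfp _ hx, hq.involutive])
  have hne {x} (hx : x ∈ W) : p x ≠ x := fun h ↦
    (hq.apply_ne_iff (f x)).2 (hf.mapsTo hx) (by rw [← hfp x hx, h])
  refine ⟨fun x ↦ if x ∈ W then p x else x, ⟨fun x ↦ ?_, fun x ↦ ?_⟩, fun x hx ↦ ?_⟩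
  · by_cases hx : x ∈ W
    · simp only [hx, hpW x hx, if_true, hpp hx]
    · simp only [hx, if_false]
  · by_cases hx : x ∈ W
    · simpa only [hx, if_true, iff_true] using hne hx
    · simp only [hx, if_false, ne_eq, not_true]
  · simp only [hx, if_true, hfp x hx]

end Pairing

section Transversal

variable {β γ : Type*} [LinearOrder β] [LinearOrder γ] {p : β → β} {W : Finset β}

lemma exists_transversal_superset (hp : IsPairing p W) {S : Finset β} (hSW : S ⊆ W)
    (hS : ∀ x ∈ S, p x ∉ S) : ∃ A ∈ transversals p W, S ⊆ A := by
  -- Of each pair that avoids `S`, pick the smaller element.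
  refine ⟨S ∪ {x ∈ W | p x ∉ S ∧ x < p x}, mem_transversals.2
    ⟨union_subset hSW (filter_subset _ _), fun x hx ↦ ?_⟩, subset_union_left⟩
  have hlt : x < p x ↔ ¬ p x < x := by
    rw [not_lt, le_iff_lt_or_eq, or_iff_left ((hp.apply_ne_iff x).2 hx).symm]
  have hSx : x ∈ S → p x ∉ S := hS x
  simp only [mem_union, mem_filter, hx, hp.apply_mem_iff, hp.involutive x, true_and]
  tauto

lemma exists_transversal_mem_mem (hp : IsPairing p W) {x y : β} (hx : x ∈ W) (hy : y ∈ W)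
    (hxy : y ≠ p x) : ∃ A ∈ transversals p W, x ∈ A ∧ y ∈ A := by
  have hyx : x ≠ p y := fun h ↦ hxy (hp.involutive.eq_iff.1 h.symm)
  have hfree : ∀ z ∈ ({x, y} : Finset β), p z ∉ ({x, y} : Finset β) := by
    simp [(hp.apply_ne_iff x).2 hx, (hp.apply_ne_iff y).2 hy, hxy.symm, hyx.symm]
  simpa only [insert_subset_iff, singleton_subset_iff] using
    hp.exists_transversal_superset (insert_subset hx (singleton_subset_iff.2 hy)) hfree

lemma exists_transversal_mem (hp : IsPairing p W) {x : β} (hx : x ∈ W) :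
    ∃ A ∈ transversals p W, x ∈ A := by
  obtain ⟨A, hA, hxA, -⟩ := hp.exists_transversal_mem_mem hx hx ((hp.apply_ne_iff x).2 hx).symm
  exact ⟨A, hA, hxA⟩

lemma transversals_nonempty (hp : IsPairing p W) : (transversals p W).Nonempty := by
  obtain ⟨A, hA, -⟩ := hp.exists_transversal_superset (empty_subset W) (by simp)
  exact ⟨A, hA⟩

lemma transversals_eq_of_subset {q : β → β} {W' : Finset β} (hp : IsPairing p W)
    (hq : IsPairing q W') (h : transversals p W ⊆ transversals q W') :
    transversals p W = transversals q W' := by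
  obtain ⟨A, hA⟩ := hp.transversals_nonempty
  have hcard : #W' = #W := by
    rw [← hp.two_mul_card_of_mem_transversals hA, ← hq.two_mul_card_of_mem_transversals (h hA)]
  have hsub : W ⊆ W' := fun x hx ↦ by
    obtain ⟨A, hA, hxA⟩ := hp.exists_transversal_mem hx
    exact (mem_transversals.1 (h hA)).1 hxA
  obtain rfl : W = W' := eq_of_subset_of_card_le hsub hcard.le
  have hqp : ∀ x ∈ W, q x = p x := by
    intro x hx
    by_contra hne
    obtain ⟨A, hA, hxA, hqxA⟩ := hp.exists_transversal_mem_mem hx (hq.apply_mem_iff.2 hx) hne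
    exact ((mem_transversals.1 (h hA)).2 x hx).1 hxA hqxA
  ext A
  simp only [mem_transversals]
  exact and_congr_right fun _ ↦ forall₂_congr fun x hx ↦ by rw [hqp x hx]

lemma exists_bijOn_semiconj [Nonempty γ] {q : γ → γ} {W' : Finset γ} (hp : IsPairing p W)
    (hq : IsPairing q W') (hcard : #W = #W') :
    ∃ f : β → γ, Set.BijOn f W W' ∧ ∀ x ∈ W, f (p x) = q (f x) := by
  obtain ⟨A, hA⟩ := hp.transversals_nonempty
  obtain ⟨B, hB⟩ := hq.transversals_nonempty
  have hAB : #A = #B := by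
    have := hp.two_mul_card_of_mem_transversals hA
    have := hq.two_mul_card_of_mem_transversals hB
    lia
  obtain ⟨g, hg⟩ := A.finite_toSet.exists_bijOn_of_encard_eq
    (t := (B : Set γ)) (by simp only [Set.encard_coe_eq_coe_finsetCard, hAB])
  obtain ⟨hAW, hAp⟩ := mem_transversals.1 hA
  have hBW : B ⊆ W' := (mem_transversals.1 hB).1
  set f : β → γ := fun x ↦ if x ∈ A then g x else q (g (p x))
  have hfA {x} (hx : x ∈ A) : f x = g x := if_pos hx
  have hfpA {x} (hx : x ∈ A) : f (p x) = q (g x) := by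
    simp only [f, if_neg ((hAp x (hAW hx)).1 hx), hp.involutive x]
  have hmaps : Set.MapsTo f W W' := by
    intro x hx
    obtain ⟨a, ha, rfl | rfl⟩ := hp.exists_mem_eq_or_eq_apply hA hx
    · exact hfA ha ▸ hBW (hg.mapsTo ha)
    · exact hfpA ha ▸ hq.apply_mem_iff.2 (hBW (hg.mapsTo ha))
  have hsurj : Set.SurjOn f W W' := by
    intro y hy
    obtain ⟨b, hb, hyb⟩ := hq.exists_mem_eq_or_eq_apply hB hy
    obtain ⟨a, ha, rfl⟩ := hg.surjOn hb
    rcases hyb with rfl | rfl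
    · exact ⟨a, hAW ha, hfA ha⟩
    · exact ⟨p a, hp.apply_mem_iff.2 (hAW ha), hfpA ha⟩
  refine ⟨f, ⟨hmaps, injOn_of_surjOn_of_card_le f hmaps hsurj hcard.le, hsurj⟩, fun x hx ↦ ?_⟩
  obtain ⟨a, ha, rfl | rfl⟩ := hp.exists_mem_eq_or_eq_apply hA hx
  · rw [hfpA ha, hfA ha]
  · rw [hfpA ha, hp.involutive, hq.involutive, hfA ha]

end Transversal

end IsPairing

lemma mem_famUnion {Γ : Finset (Finset ℕ)} {x : ℕ} : x ∈ famUnion Γ ↔ ∃ A ∈ Γ, x ∈ A := by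
  simp [famUnion, mem_sup]

lemma mem_famInter {Γ : Finset (Finset ℕ)} (hΓ : Γ.Nonempty) {x : ℕ} :
    x ∈ famInter Γ ↔ ∀ A ∈ Γ, x ∈ A := by
  obtain ⟨B, hB⟩ := hΓ
  rw [famInter, mem_filter, and_iff_right_iff_imp]
  exact fun h ↦ mem_famUnion.2 ⟨B, hB, h B hB⟩

lemma famInter_subset_famUnion {Γ : Finset (Finset ℕ)} : famInter Γ ⊆ famUnion Γ :=
  filter_subset _ _

lemma famUnion_subset_iff {Γ : Finset (Finset ℕ)} {W : Finset ℕ} :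
    famUnion Γ ⊆ W ↔ ∀ A ∈ Γ, A ⊆ W :=
  Finset.sup_le_iff

lemma isHKE_singleton {A : Finset ℕ} (hA : A.Nonempty) : IsHKE {A} #A := by
  refine ⟨card_pos.2 hA, fun Γ hΓ hne ↦ ?_⟩
  obtain rfl : Γ = {A} := hne.subset_singleton_iff.1 hΓ
  have hU : famUnion {A} = A := by ext; simp [mem_famUnion]
  have hI : famInter {A} = A := by ext; simp [mem_famInter]
  rw [hU, hI, two_mul]

lemma IsMaxHKE.nonempty {F : Finset (Finset ℕ)} (hF : IsMaxHKE F) : F.Nonempty := by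
  by_contra hne
  obtain rfl := not_nonempty_iff_eq_empty.1 hne
  exact hF.2 {{0}} (empty_ssubset.2 (singleton_nonempty _))
    ⟨_, isHKE_singleton (singleton_nonempty 0)⟩

lemma IsPairing.famUnion_transversals {p : ℕ → ℕ} {W : Finset ℕ} (hp : IsPairing p W) :
    famUnion (transversals p W) = W := by
  refine Subset.antisymm (famUnion_subset_iff.2 fun A hA ↦ (mem_transversals.1 hA).1) fun x hx ↦ ?_
  exact mem_famUnion.2 (hp.exists_transversal_mem hx)

lemma IsPairing.exists_isHKE_transversals {p : ℕ → ℕ} {W : Finset ℕ} (hp : IsPairing p W)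
    (hW : W.Nonempty) : ∃ α, IsHKE (transversals p W) α := by
  obtain ⟨A, hA⟩ := hp.transversals_nonempty
  have hcard := hp.two_mul_card_of_mem_transversals hA
  have hpos := hW.card_pos
  refine ⟨#A, by lia, fun Γ hΓ hne ↦ ?_⟩
  have hU : famUnion Γ ⊆ W :=
    famUnion_subset_iff.2 fun A hA ↦ (mem_transversals.1 (hΓ hA)).1
  rw [hcard]
  refine hp.card_add_card_eq (famInter_subset_famUnion.trans hU) hU fun x hx ↦ ?_
  simp only [mem_famInter hne, mem_famUnion, not_exists, not_and]
  exact forall₂_congr fun A hA ↦ (mem_transversals.1 (hΓ hA)).2 x hx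

namespace IsHKE

variable {F : Finset (Finset ℕ)} {α : ℕ}

lemma card_filter_subset_eq {A₀ W : Finset ℕ} (hF : IsHKE F α) (hA₀ : A₀ ∈ F)
    (hFW : famUnion F ⊆ W) (hW : #W = 2 * α) (Γ : Finset (Finset ℕ)) :
    #{x ∈ A₀ | Γ ⊆ {A ∈ F | x ∈ A}} = #{x ∈ W \ A₀ | Γ ⊆ {A ∈ F | x ∉ A}} := by
  by_cases hΓ : Γ ⊆ F
  · have hne : (insert A₀ Γ).Nonempty := insert_nonempty A₀ Γ
    have hinter : {x ∈ A₀ | Γ ⊆ {A ∈ F | x ∈ A}} = famInter (insert A₀ Γ) := by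
      ext x
      simp only [mem_filter, subset_iff, mem_famInter hne, forall_mem_insert]
      grind
    have hunion : {x ∈ W \ A₀ | Γ ⊆ {A ∈ F | x ∉ A}} = W \ famUnion (insert A₀ Γ) := by
      ext x
      simp only [mem_filter, subset_iff, mem_sdiff, mem_famUnion, exists_mem_insert]
      grind
    have hsub : famUnion (insert A₀ Γ) ⊆ W :=
      (sup_mono (insert_subset hA₀ hΓ)).trans hFW
    have hke := hF.2 _ (insert_subset hA₀ hΓ) hne
    rw [hinter, hunion, card_sdiff_of_subset hsub]
    lia
  · have hnot (P : Finset ℕ → Prop) [DecidablePred P] : ¬ Γ ⊆ {A ∈ F | P A} :=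
      fun h ↦ hΓ (h.trans (filter_subset _ _))
    simp only [hnot, filter_false, card_empty]

lemma exists_subset_transversals (hF : IsHKE F α) (hne : F.Nonempty) :
    ∃ p W, W.Nonempty ∧ IsPairing p W ∧ F ⊆ transversals p W := by
  obtain ⟨A₀, hA₀⟩ := hne
  have hke := hF.2 F Subset.rfl ⟨A₀, hA₀⟩
  obtain ⟨W, hFW, hW⟩ := Infinite.exists_superset_card_eq (famUnion F) (2 * α) (by lia)
  have hsub : ∀ A ∈ F, A ⊆ W := famUnion_subset_iff.1 hFW
  obtain ⟨e, he, heF⟩ :=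
    exists_bijOn_of_card_filter_le_eq (hF.card_filter_subset_eq hA₀ hFW hW)
  obtain ⟨p, hp, hpe⟩ := IsPairing.exists_eqOn_of_bijOn he disjoint_sdiff
  rw [union_sdiff_of_subset (hsub A₀ hA₀)] at hp
  have hsplit {x A} (hx : x ∈ A₀) (hA : A ∈ F) : p x ∉ A ↔ x ∈ A := by
    simpa [hA, hpe hx] using Finset.ext_iff.1 (heF x hx) A
  refine ⟨p, W, card_pos.1 (by have := hF.1; lia), hp, fun A hA ↦
    mem_transversals.2 ⟨hsub A hA, fun x hx ↦ ?_⟩⟩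
  by_cases hxA₀ : x ∈ A₀
  · exact (hsplit hxA₀ hA).symm
  · obtain ⟨a, ha, rfl⟩ := he.surjOn (mem_sdiff.2 ⟨hx, hxA₀⟩)
    rw [← hpe ha, hp.involutive, ← hsplit ha hA, not_not]

end IsHKE

theorem isMaxHKE_iff_exists_eq_transversals {F : Finset (Finset ℕ)} :
    IsMaxHKE F ↔ ∃ p W, W.Nonempty ∧ IsPairing p W ∧ F = transversals p W := by
  constructor
  · intro hF
    obtain ⟨α, hα⟩ := hF.1
    obtain ⟨p, W, hW, hp, hsub⟩ := hα.exists_subset_transversals hF.nonempty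
    refine ⟨p, W, hW, hp, hsub.eq_of_not_ssubset fun hlt ↦ ?_⟩
    exact hF.2 _ hlt (hp.exists_isHKE_transversals hW)
  · rintro ⟨p, W, hW, hp, rfl⟩
    refine ⟨hp.exists_isHKE_transversals hW, fun F' hlt ⟨β, hβ⟩ ↦ ?_⟩
    obtain ⟨q, W', -, hq, hsub⟩ :=
      hβ.exists_subset_transversals (hp.transversals_nonempty.mono hlt.subset)
    have heq := hp.transversals_eq_of_subset hq (hlt.subset.trans hsub)
    exact hlt.not_subset (heq ▸ hsub)

/-- The subgraph of `G` induced on `V` has exactly the edges `{x, p x}`, so that it is a perfect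
matching of `V` if `p` is a pairing of `V`. -/
def IsMatchedBy {β : Type*} (G : SimpleGraph β) (V : Finset β) (p : β → β) : Prop :=
  ∀ x ∈ V, ∀ y ∈ V, G.Adj x y ↔ y = p x

section Omega

variable {G : SimpleGraph ℕ} {V S : Finset ℕ} {p : ℕ → ℕ}

lemma mem_omegaColl :
    S ∈ omegaColl G V ↔ S ⊆ V ∧ IsIndepFinset G S ∧ #S = indepNum G V := by
  simp [omegaColl]

lemma card_le_indepNum (hSV : S ⊆ V) (hS : IsIndepFinset G S) : #S ≤ indepNum G V :=
  le_sup (f := card) (by simp [hSV, hS])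

lemma isIndepFinset_insert {v : ℕ} (hS : IsIndepFinset G S) (hv : ∀ x ∈ S, ¬ G.Adj x v) :
    IsIndepFinset G (insert v S) := by
  simp only [IsIndepFinset, forall_mem_insert, SimpleGraph.irrefl, not_false_eq_true, true_and]
  exact ⟨fun x hx h ↦ hv x hx h.symm, fun x hx ↦ ⟨hv x hx, hS x hx⟩⟩

lemma IsMatchedBy.isIndepFinset_iff (hG : IsMatchedBy G V p) (hSV : S ⊆ V) :
    IsIndepFinset G S ↔ ∀ x ∈ S, p x ∉ S := by
  refine forall₂_congr fun x hx ↦ ⟨fun h hpx ↦ h _ hpx ?_, fun h y hy hxy ↦ h ?_⟩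
  · exact (hG x (hSV hx) _ (hSV hpx)).2 rfl
  · exact (hG x (hSV hx) y (hSV hy)).1 hxy ▸ hy

lemma IsMatchedBy.isIndepFinset_of_mem_transversals (hG : IsMatchedBy G V p)
    (hS : S ∈ transversals p V) : IsIndepFinset G S := by
  obtain ⟨hSV, hSp⟩ := mem_transversals.1 hS
  exact (hG.isIndepFinset_iff hSV).2 fun x hx ↦ (hSp x (hSV hx)).1 hx

lemma IsMatchedBy.card_eq_indepNum_of_mem_transversals (hG : IsMatchedBy G V p)
    (hp : IsPairing p V) (hS : S ∈ transversals p V) : #S = indepNum G V := by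
  refine le_antisymm (card_le_indepNum (mem_transversals.1 hS).1
    (hG.isIndepFinset_of_mem_transversals hS)) (Finset.sup_le fun T hT ↦ ?_)
  simp only [mem_filter, mem_powerset] at hT
  obtain ⟨A, hA, hTA⟩ :=
    hp.exists_transversal_superset hT.1 ((hG.isIndepFinset_iff hT.1).1 hT.2)
  have hcardS := hp.two_mul_card_of_mem_transversals hS
  have hcardA := hp.two_mul_card_of_mem_transversals hA
  exact (card_le_card hTA).trans (by lia)

lemma IsMatchedBy.two_mul_indepNum (hG : IsMatchedBy G V p) (hp : IsPairing p V) :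
    2 * indepNum G V = #V := by
  obtain ⟨A, hA⟩ := hp.transversals_nonempty
  rw [← hG.card_eq_indepNum_of_mem_transversals hp hA, hp.two_mul_card_of_mem_transversals hA]

lemma IsMatchedBy.omegaColl_eq (hG : IsMatchedBy G V p) (hp : IsPairing p V) :
    omegaColl G V = transversals p V := by
  ext S
  rw [mem_omegaColl]
  constructor
  · rintro ⟨hSV, hS, hcard⟩
    obtain ⟨A, hA, hSA⟩ := hp.exists_transversal_superset hSV ((hG.isIndepFinset_iff hSV).1 hS)
    have hcardA := hG.card_eq_indepNum_of_mem_transversals hp hA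
    rwa [eq_of_subset_of_card_le hSA (hcardA.trans hcard.symm).le]
  · exact fun hS ↦ ⟨(mem_transversals.1 hS).1, hG.isIndepFinset_of_mem_transversals hS,
      hG.card_eq_indepNum_of_mem_transversals hp hS⟩

lemma isMatchedBy_of_omegaColl_eq (hp : IsPairing p V) (hΩ : omegaColl G V = transversals p V) :
    IsMatchedBy G V p := by
  have hadj : ∀ x ∈ V, ∀ y ∈ V, G.Adj x y → y = p x := by
    intro x hx y hy hxy
    by_contra hne
    obtain ⟨A, hA, hxA, hyA⟩ := hp.exists_transversal_mem_mem hx hy hne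
    exact (mem_omegaColl.1 (hΩ ▸ hA)).2.1 x hxA y hyA hxy
  refine fun x hx y hy ↦ ⟨hadj x hx y hy, ?_⟩
  rintro rfl
  by_contra hnadj
  obtain ⟨A, hA, hxA⟩ := hp.exists_transversal_mem hx
  obtain ⟨hAV, hAindep, hAcard⟩ := mem_omegaColl.1 (hΩ ▸ hA)
  have hpxA : p x ∉ A := ((mem_transversals.1 hA).2 x hx).1 hxA
  have hisolated : ∀ z ∈ A, ¬ G.Adj z (p x) := by
    intro z hz hzp
    obtain rfl := hp.involutive.injective (hadj z (hAV hz) _ hy hzp)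
    exact hnadj hzp
  have hle := card_le_indepNum (insert_subset hy hAV) (isIndepFinset_insert hAindep hisolated)
  rw [card_insert_of_notMem hpxA, hAcard] at hle
  lia

end Omega

/-- The neighbour of the vertex `i` in the typical KE graph for `α`; the identity outside the vertex
set `{1, …, 2α}`, as `IsPairing` demands. -/
def typicalPartner (α i : ℕ) : ℕ :=
  if i ∈ Icc 1 α then i + α else if i ∈ Icc (α + 1) (2 * α) then i - α else i

lemma isPairing_typicalPartner (α : ℕ) : IsPairing (typicalPartner α) (Icc 1 (2 * α)) := by
  constructor <;> intro i <;> grind [typicalPartner]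

lemma eq_typicalPartner_iff {α i j : ℕ} (hi : i ∈ Icc 1 (2 * α)) :
    j = typicalPartner α i ↔ (j = i + α ∧ i ∈ Icc 1 α) ∨ (i = j + α ∧ j ∈ Icc 1 α) := by
  grind [typicalPartner]

lemma exists_iso_typical_iff_exists_isMatchedBy {β : Type*} [LinearOrder β] {G : SimpleGraph β}
    {V : Finset β} {α : ℕ} :
    (∃ f : β → ℕ, Set.BijOn f V (Icc 1 (2 * α)) ∧ ∀ x ∈ V, ∀ y ∈ V,
      (G.Adj x y ↔ (f y = f x + α ∧ f x ∈ Icc 1 α) ∨ (f x = f y + α ∧ f y ∈ Icc 1 α))) ↔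
    #V = 2 * α ∧ ∃ p, IsPairing p V ∧ IsMatchedBy G V p := by
  have hq := isPairing_typicalPartner α
  constructor
  · rintro ⟨f, hf, hadj⟩
    obtain ⟨p, hp, hfp⟩ := hq.exists_semiconj_of_bijOn hf
    refine ⟨by simpa using hf.finsetCard_eq, p, hp, fun x hx y hy ↦ ?_⟩
    rw [hadj x hx y hy, ← eq_typicalPartner_iff (hf.mapsTo hx), ← hfp x hx,
      hf.injOn.eq_iff hy (hp.apply_mem_iff.2 hx)]
  · rintro ⟨hcard, p, hp, hG⟩
    obtain ⟨f, hf, hfp⟩ := hp.exists_bijOn_semiconj hq (by simpa using hcard)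
    refine ⟨f, hf, fun x hx y hy ↦ ?_⟩
    rw [hG x hx y hy, ← eq_typicalPartner_iff (hf.mapsTo hx), ← hfp x hx,
      hf.injOn.eq_iff hy (hp.apply_mem_iff.2 hx)]

/-- let `G` be a finite simple graph (vertex set `V`, all edges inside `V`)
such that every vertex belongs to some maximum independent set (`V = corona(G)`).
Then `G` is isomorphic to the typical KE graph for `α(G)` (the graph on `{1, …, 2α(G)}`
whose edges are exactly the pairs `{i, i + α(G)}` for `i ∈ {1, …, α(G)}`)
iff `Ω(G)` is a maximal hke collection. -/
theorem iso_typicalKEGraph_iff_omega_isMaxHKE (G : SimpleGraph ℕ) (V : Finset ℕ)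
    (hV : V.Nonempty)
    (hedge : ∀ x y, G.Adj x y → x ∈ V ∧ y ∈ V)
    (hcorona : V = famUnion (omegaColl G V)) :
    (∃ f : ℕ → ℕ,
      Set.BijOn f ↑V ↑(Finset.Icc 1 (2 * indepNum G V)) ∧
      ∀ x ∈ V, ∀ y ∈ V,
        (G.Adj x y ↔
          ((f y = f x + indepNum G V ∧ f x ∈ Finset.Icc 1 (indepNum G V)) ∨
           (f x = f y + indepNum G V ∧ f y ∈ Finset.Icc 1 (indepNum G V)))))
    ↔ IsMaxHKE (omegaColl G V) := by
  rw [exists_iso_typical_iff_exists_isMatchedBy, isMaxHKE_iff_exists_eq_transversals]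
  constructor
  · rintro ⟨-, p, hp, hG⟩
    exact ⟨p, V, hV, hp, hG.omegaColl_eq hp⟩
  · rintro ⟨p, W, -, hp, hΩ⟩
    obtain rfl : V = W := by rw [hcorona, hΩ, hp.famUnion_transversals]
    have hG := isMatchedBy_of_omegaColl_eq hp hΩ
    exact ⟨(hG.two_mul_indepNum hp).symm, p, hp, hG⟩
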